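/- Let n ≥ 1, let (Y,d) be a metric space with at least two points and basepoint y₀, 0 < β ≤ 1, and equip ℝⁿ × Y with the metric D((x₁,y₁),(x₂,y₂)) = max{|x₁−x₂|^β, d(y₁,y₂)}. Suppose a group Γ acts on ℝⁿ × Y such that every γ ∈ Γ has the form γ(x,y) = (a_γ A_γ(x + x_γ + h_γ(y)), σ_γ(y)) with a_γ > 0, A_γ ∈ O(n), x_γ ∈ ℝⁿ, h_γ: Y → ℝⁿ Lipschitz as a map (Y,d) → (ℝⁿ,|·|^β) with h_γ(y₀) = 0, and σ_γ a similarity of Y, and suppose Γ acts as a uniform quasisimilarity group of (ℝⁿ × Y, D) with uniformity constant M. Then there is a constant C > 0 (one may take C = M²) such that for every γ ∈ Γ the map h_γ is C-Lipschitz as a map (Y,d) → (ℝⁿ,|·|^β), i.e. |h_γ(y₁) − h_γ(y₂)|^β ≤ C·d(y₁,y₂) for all y₁, y₂ ∈ Y. -/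

import Mathlib

/-- The metric `D((x₁,y₁),(x₂,y₂)) = max{|x₁−x₂|^β, d(y₁,y₂)}` on `ℝⁿ × Y`. -/
noncomputable def prodDist (n : ℕ) {Y : Type*} [MetricSpace Y] (β : ℝ)
    (p q : EuclideanSpace ℝ (Fin n) × Y) : ℝ :=
  max (‖p.1 - q.1‖ ^ β) (dist p.2 q.2)

/-! On a horizontal fibre `ℝⁿ × {y}` the map `γ` multiplies `D` by exactly `a_γ ^ β`, so the lower
quasisimilarity bound there gives `C / M ≤ a_γ ^ β`. Two points `(u, y₁)`, `(u, y₂)` of a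
vertical slice are at distance `d(y₁, y₂)`, while the first coordinates of their images are
`a_γ |h_γ y₁ - h_γ y₂|` apart, so the upper bound there gives
`a_γ ^ β |h_γ y₁ - h_γ y₂| ^ β ≤ M C d(y₁, y₂)`. The ratio of the two bounds is `M ^ 2`. -/

section SnowflakeProd

variable {E Y : Type*} [PseudoMetricSpace E] [PseudoMetricSpace Y]

/-- The distance `max (d(u, v) ^ β) (d(y, z))` on the product of the `β`-snowflake of `E` with `Y`.
It is a plain function, so as not to compete with the sup metric that `E × Y` already carries. -/
noncomputable def snowflakeProdDist (β : ℝ) (p q : E × Y) : ℝ :=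
  max (dist p.1 q.1 ^ β) (dist p.2 q.2)

theorem snowflakeProdDist_mk_same_right (β : ℝ) (u v : E) (y : Y) :
    snowflakeProdDist β (u, y) (v, y) = dist u v ^ β := by
  simpa only [snowflakeProdDist, dist_self] using max_eq_left (Real.rpow_nonneg dist_nonneg β)

theorem snowflakeProdDist_mk_same_left {β : ℝ} (hβ : 0 < β) (u : E) (y z : Y) :
    snowflakeProdDist β (u, y) (u, z) = dist y z := by
  simpa only [snowflakeProdDist, dist_self, Real.zero_rpow hβ.ne'] using max_eq_right dist_nonneg

end SnowflakeProd

theorem prodDist_eq_snowflakeProdDist {n : ℕ} {Y : Type*} [MetricSpace Y] (β : ℝ)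
    (p q : EuclideanSpace ℝ (Fin n) × Y) : prodDist n β p q = snowflakeProdDist β p q := by
  rw [prodDist, snowflakeProdDist, dist_eq_norm]

section Triangular

variable {E F Y Z : Type*}

/-- The fibre-preserving map `(u, y) ↦ (T (u + h y), σ y)`: a shear of the fibres by `h`, followed
by `T` on the fibres and `σ` on the base. -/
def triangularMap [Add E] (T : E → F) (h : Y → E) (σ : Y → Z) (p : E × Y) : F × Z :=
  (T (p.1 + h p.2), σ p.2)

/-- The similarity `u ↦ a • A (u + x)` of ratio `‖a‖`, with the translation applied first as in the
fibre maps of the action. -/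
def affineSimilarity {𝕜 : Type*} [NormedField 𝕜] [SeminormedAddCommGroup E] [NormedSpace 𝕜 E]
    [SeminormedAddCommGroup F] [NormedSpace 𝕜 F] (a : 𝕜) (ha : a ≠ 0) (A : E →ₗᵢ[𝕜] F) (x : E) :
    E →ᵈ F :=
  Dilation.mkOfDistEq (fun u ↦ a • A (u + x))
    ⟨‖a‖₊, nnnorm_ne_zero_iff.mpr ha, fun u v ↦ by
      rw [dist_smul₀, A.dist_map, dist_add_right, coe_nnnorm]⟩

variable [PseudoMetricSpace F] [PseudoMetricSpace Z]

theorem snowflakeProdDist_triangularMap_same_right [SeminormedAddCommGroup E] (β : ℝ) (T : E →ᵈ F)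
    (h : Y → E) (σ : Y → Z) (u v : E) (y : Y) :
    snowflakeProdDist β (triangularMap T h σ (u, y)) (triangularMap T h σ (v, y)) =
      Dilation.ratio T ^ β * dist u v ^ β := by
  rw [triangularMap, triangularMap, snowflakeProdDist_mk_same_right, Dilation.dist_eq,
    dist_add_right, Real.mul_rpow (NNReal.coe_nonneg _) dist_nonneg]

theorem ratio_rpow_mul_le_snowflakeProdDist_triangularMap [SeminormedAddCommGroup E] (β : ℝ)
    (T : E →ᵈ F) (h : Y → E) (σ : Y → Z) (u : E) (y z : Y) :
    Dilation.ratio T ^ β * dist (h y) (h z) ^ β ≤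
      snowflakeProdDist β (triangularMap T h σ (u, y)) (triangularMap T h σ (u, z)) := by
  rw [← Real.mul_rpow (NNReal.coe_nonneg _) dist_nonneg, ← dist_add_left u, ← Dilation.dist_eq]
  exact le_max_left _ _

theorem le_ratio_rpow_of_le_snowflakeProdDist_triangularMap [NormedAddCommGroup E]
    [Nontrivial E] [PseudoMetricSpace Y] {β K : ℝ} {T : E →ᵈ F} {h : Y → E} {σ : Y → Z} (y : Y)
    (lower : ∀ p q : E × Y, K * snowflakeProdDist β p q ≤
      snowflakeProdDist β (triangularMap T h σ p) (triangularMap T h σ q)) :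
    K ≤ Dilation.ratio T ^ β := by
  obtain ⟨u, v, huv⟩ := exists_pair_ne E
  have fibre := lower (u, y) (v, y)
  rw [snowflakeProdDist_mk_same_right, snowflakeProdDist_triangularMap_same_right] at fibre
  exact le_of_mul_le_mul_right fibre (Real.rpow_pos_of_pos (dist_pos.mpr huv) β)

end Triangular

theorem h_uniformly_lipschitz_general {E F Y Z : Type*} [NormedAddCommGroup E] [Nontrivial E]
    [PseudoMetricSpace F] [PseudoMetricSpace Y] [PseudoMetricSpace Z] {T : E →ᵈ F} {h : Y → E}
    {σ : Y → Z} {β K₁ K₂ : ℝ} (hβ : 0 < β) (hK₁ : 0 < K₁)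
    (lower : ∀ p q : E × Y, K₁ * snowflakeProdDist β p q ≤
      snowflakeProdDist β (triangularMap T h σ p) (triangularMap T h σ q))
    (upper : ∀ p q : E × Y, snowflakeProdDist β (triangularMap T h σ p) (triangularMap T h σ q) ≤
      K₂ * snowflakeProdDist β p q) (y z : Y) :
    dist (h y) (h z) ^ β ≤ K₂ / K₁ * dist y z := by
  rw [div_mul_eq_mul_div, le_div_iff₀' hK₁]
  calc K₁ * dist (h y) (h z) ^ β
      ≤ Dilation.ratio T ^ β * dist (h y) (h z) ^ β := by
        gcongr
        exact le_ratio_rpow_of_le_snowflakeProdDist_triangularMap y lower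
    _ ≤ snowflakeProdDist β (triangularMap T h σ (0, y)) (triangularMap T h σ (0, z)) :=
        ratio_rpow_mul_le_snowflakeProdDist_triangularMap β T h σ 0 y z
    _ ≤ K₂ * snowflakeProdDist β ((0 : E), y) (0, z) := upper _ _
    _ = K₂ * dist y z := by rw [snowflakeProdDist_mk_same_left hβ]

/-- Lemma 3.1(2): If a group `Γ` acts on `ℝⁿ × Y` by maps of the form
`γ(x,y) = (a_γ A_γ(x + x_γ + h_γ y), σ_γ y)` and acts as a uniform quasisimilarity group
of `(ℝⁿ × Y, D)` with uniformity constant `M`, then there is `C > 0` (namely `C = M²`)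
such that every `h_γ` is `C`-Lipschitz as a map `(Y,d) → (ℝⁿ,|·|^β)`:
`|h_γ y₁ - h_γ y₂|^β ≤ M² · d(y₁,y₂)`. -/
theorem h_uniformly_lipschitz (n : ℕ) (hn : 1 ≤ n) {Y : Type*} [MetricSpace Y]
    (hY : ∃ y y' : Y, y ≠ y') (y₀ : Y) (β : ℝ) (hβ0 : 0 < β) (hβ1 : β ≤ 1)
    {Γ : Type*} [Group Γ]
    (ρ : Γ →* Equiv.Perm (EuclideanSpace ℝ (Fin n) × Y))
    (a : Γ → ℝ) (ha : ∀ γ : Γ, 0 < a γ)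
    (A : Γ → EuclideanSpace ℝ (Fin n) ≃ₗᵢ[ℝ] EuclideanSpace ℝ (Fin n))
    (x : Γ → EuclideanSpace ℝ (Fin n))
    (h : Γ → Y → EuclideanSpace ℝ (Fin n))
    (hLip : ∀ γ : Γ, ∃ L : ℝ, ∀ y₁ y₂ : Y, ‖h γ y₁ - h γ y₂‖ ^ β ≤ L * dist y₁ y₂)
    (hh0 : ∀ γ : Γ, h γ y₀ = 0)
    (σ : Γ → Y → Y)
    (hσ : ∀ γ : Γ, Function.Bijective (σ γ) ∧
      ∃ c : ℝ, 0 < c ∧ ∀ y y' : Y, dist (σ γ y) (σ γ y') = c * dist y y')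
    (hform : ∀ (γ : Γ) (p : EuclideanSpace ℝ (Fin n) × Y),
      ρ γ p = (a γ • A γ (p.1 + x γ + h γ p.2), σ γ p.2))
    (M : ℝ) (hM : 1 ≤ M)
    (hqs : ∀ γ : Γ, ∃ C : ℝ, 0 < C ∧
      ∀ p q : EuclideanSpace ℝ (Fin n) × Y,
        C / M * prodDist n β p q ≤ prodDist n β (ρ γ p) (ρ γ q) ∧
          prodDist n β (ρ γ p) (ρ γ q) ≤ M * C * prodDist n β p q) :
    0 < M ^ 2 ∧
      ∀ (γ : Γ) (y₁ y₂ : Y), ‖h γ y₁ - h γ y₂‖ ^ β ≤ M ^ 2 * dist y₁ y₂ := by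
  have hM0 : 0 < M := one_pos.trans_le hM
  have : NeZero n := ⟨Nat.one_le_iff_ne_zero.mp hn⟩
  refine ⟨pow_pos hM0 2, fun γ y₁ y₂ ↦ ?_⟩
  obtain ⟨C, hC, hbounds⟩ := hqs γ
  have hρ : ⇑(ρ γ) =
      triangularMap (affineSimilarity (a γ) (ha γ).ne' (A γ).toLinearIsometry (x γ)) (h γ) (σ γ) :=
    funext fun p ↦ (hform γ p).trans (by rw [add_right_comm]; rfl)
  simp only [hρ, prodDist_eq_snowflakeProdDist] at hbounds
  have hratio : M * C / (C / M) = M ^ 2 := by field_simp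
  rw [← dist_eq_norm, ← hratio]
  exact h_uniformly_lipschitz_general hβ0 (div_pos hC hM0) (fun p q ↦ (hbounds p q).1)
    (fun p q ↦ (hbounds p q).2) y₁ y₂
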